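/- Let S ⊂ ℝ^k be a halfspace and let Σ ⊆ S be an additive semigroup containing 0 (i.e., λ, μ ∈ Σ implies λ + μ ∈ Σ). Then the unital Banach algebra APW^k_Σ, consisting of almost periodic functions with absolutely convergent Bohr-Fourier series and Bohr-Fourier spectrum in Σ, is an Hermite ring. -/

import Mathlib

/- Almost periodic functions of `k` real variables, their Bohr-Fourier
coefficients and spectra, the Wiener algebra, and halfspaces. -/

open MeasureTheory Filter BoundedContinuousFunction

noncomputable section

/-- The Banach algebra of bounded continuous functions `ℝ^k → ℂ` (sup norm). -/
abbrev APB (k : ℕ) := BoundedContinuousFunction (Fin k → ℝ) ℂ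

/-- The elementary exponential `e_λ(x) = e^{i⟨λ,x⟩}` as a bounded continuous function. -/
def apExp (k : ℕ) (lam : Fin k → ℝ) : APB k :=
  BoundedContinuousFunction.ofNormedAddCommGroup
    (fun x => Complex.exp (Complex.I * ((∑ j, lam j * x j : ℝ) : ℂ)))
    (by fun_prop) 1
    (fun x => by
      simp [Complex.norm_exp, Complex.mul_re])

/-- `AP^k`: the closed subalgebra of `L^∞`-type bounded continuous functions
generated by all exponentials `e_λ`, `λ ∈ ℝ^k`. -/
def APalg (k : ℕ) : Subalgebra ℂ (APB k) :=
  (Algebra.adjoin ℂ (Set.range (apExp k))).topologicalClosure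

/-- The Bohr-Fourier coefficient
`f_λ = lim_{T→∞} (2T)^{-k} ∫_{[-T,T]^k} e^{-i⟨λ,x⟩} f(x) dx`. -/
def bohrCoeff (k : ℕ) (f : (Fin k → ℝ) → ℂ) (lam : Fin k → ℝ) : ℂ :=
  limUnder atTop (fun T : ℝ =>
    (((2 * T) ^ k : ℝ) : ℂ)⁻¹ *
      ∫ x in Set.Icc (fun _ => -T : Fin k → ℝ) (fun _ => T),
        Complex.exp (-(Complex.I * ((∑ j, lam j * x j : ℝ) : ℂ))) * f x)

/-- The Bohr-Fourier spectrum `σ(f) = {λ : f_λ ≠ 0}`. -/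
def bohrSpectrum (k : ℕ) (f : (Fin k → ℝ) → ℂ) : Set (Fin k → ℝ) :=
  {lam | bohrCoeff k f lam ≠ 0}

/-- Membership in `AP^k_Δ = {f ∈ AP^k : σ(f) ⊆ Δ}`. -/
def APmem (k : ℕ) (Δ : Set (Fin k → ℝ)) (f : APB k) : Prop :=
  f ∈ APalg k ∧ bohrSpectrum k ⇑f ⊆ Δ

/-- Membership in the Wiener algebra `APW^k_Δ`: almost periodic with spectrum
in `Δ` and absolutely convergent Bohr-Fourier series. -/
def APWmem (k : ℕ) (Δ : Set (Fin k → ℝ)) (f : APB k) : Prop :=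
  APmem k Δ f ∧ Summable (fun lam => ‖bohrCoeff k (⇑f) lam‖)

/-- The Wiener norm `‖f‖_W = ∑_λ |f_λ|`. -/
def wienerNorm (k : ℕ) (f : (Fin k → ℝ) → ℂ) : ℝ :=
  ∑' lam, ‖bohrCoeff k f lam‖

/-- A halfspace `S ⊂ ℝ^k`: `ℝ^k = S ∪ (-S)`, `S ∩ (-S) = {0}`, and `S` is
closed under addition and under multiplication by nonnegative reals. -/
structure IsHalfspace (k : ℕ) (S : Set (Fin k → ℝ)) : Prop where
  union : S ∪ -S = Set.univ
  inter : S ∩ -S = {0}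
  add_mem : ∀ x ∈ S, ∀ y ∈ S, x + y ∈ S
  smul_mem : ∀ x ∈ S, ∀ a : ℝ, 0 ≤ a → a • x ∈ S

open scoped Topology

variable {k : ℕ}

/-! ### Exponentials -/

lemma apExp_apply (lam x : Fin k → ℝ) :
    apExp k lam x = Complex.exp (Complex.I * ((∑ j, lam j * x j : ℝ) : ℂ)) := rfl

lemma apExp_zero : apExp k 0 = 1 := by
  ext x
  simp [apExp_apply]

lemma apExp_add (lam mu : Fin k → ℝ) : apExp k (lam + mu) = apExp k lam * apExp k mu := by
  ext x
  simp only [BoundedContinuousFunction.mul_apply, apExp_apply, ← Complex.exp_add, Pi.add_apply,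
    add_mul, Finset.sum_add_distrib]
  push_cast
  ring_nf

lemma norm_apExp_apply (lam x : Fin k → ℝ) : ‖apExp k lam x‖ = 1 := by
  rw [apExp_apply, mul_comm, Complex.norm_exp_ofReal_mul_I]

lemma norm_apExp_le (lam : Fin k → ℝ) : ‖apExp k lam‖ ≤ 1 :=
  (BoundedContinuousFunction.norm_le zero_le_one).2 fun x => (norm_apExp_apply lam x).le

lemma norm_smul_apExp_le (c : ℂ) (lam : Fin k → ℝ) : ‖c • apExp k lam‖ ≤ ‖c‖ := by
  rw [norm_smul]
  exact mul_le_of_le_one_right (norm_nonneg _) (norm_apExp_le lam)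

lemma star_apExp (lam : Fin k → ℝ) : star (apExp k lam) = apExp k (-lam) := by
  ext x
  simp only [BoundedContinuousFunction.star_apply, apExp_apply, RCLike.star_def,
    ← Complex.exp_conj, map_mul, Complex.conj_I, Complex.conj_ofReal, Pi.neg_apply, neg_mul,
    Finset.sum_neg_distrib, Complex.ofReal_neg, mul_neg]

/-! ### Absolutely convergent exponential series -/

/-- `f` is the sum of an exponential series with frequencies in `A` (repetitions allowed) whose
coefficients have total mass at most `r`. -/
def HasExpSeries (A : Set (Fin k → ℝ)) (f : APB k) (r : ℝ) : Prop :=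
  ∃ (ι : Type) (l : ι → Fin k → ℝ) (c : ι → ℂ), (∀ i, l i ∈ A) ∧ Summable (fun i => ‖c i‖) ∧
    ∑' i, ‖c i‖ ≤ r ∧ HasSum (fun i => c i • apExp k (l i)) f

namespace HasExpSeries

variable {A : Set (Fin k → ℝ)} {f g : APB k} {r s : ℝ}

lemma mono (hf : HasExpSeries A f r) (hrs : r ≤ s) : HasExpSeries A f s := by
  obtain ⟨ι, l, c, hl, hc, hr, hs⟩ := hf
  exact ⟨ι, l, c, hl, hc, hr.trans hrs, hs⟩

lemma nonneg (hf : HasExpSeries A f r) : 0 ≤ r := by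
  obtain ⟨ι, l, c, hl, hc, hr, hs⟩ := hf
  exact (tsum_nonneg fun i => norm_nonneg _).trans hr

lemma norm_le (hf : HasExpSeries A f r) : ‖f‖ ≤ r := by
  obtain ⟨ι, l, c, hl, hc, hr, hs⟩ := hf
  rw [← hs.tsum_eq]
  exact (tsum_of_norm_bounded hc.hasSum fun i => norm_smul_apExp_le _ _).trans hr

lemma of_finset_sum {κ : Type} (F : Finset κ) (l : κ → Fin k → ℝ) (c : κ → ℂ)
    (hl : ∀ i ∈ F, l i ∈ A) :
    HasExpSeries A (∑ i ∈ F, c i • apExp k (l i)) (∑ i ∈ F, ‖c i‖) := by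
  refine ⟨F, fun i => l i, fun i => c i, fun i => hl i i.2, (hasSum_fintype _).summable, ?_, ?_⟩
  · rw [tsum_fintype, Finset.sum_coe_sort F fun i => ‖c i‖]
  · rw [← Finset.sum_coe_sort F fun i => c i • apExp k (l i)]
    exact hasSum_fintype _

lemma apExp {lam : Fin k → ℝ} (hlam : lam ∈ A) (c : ℂ) :
    HasExpSeries A (c • apExp k lam) ‖c‖ := by
  simpa using of_finset_sum (A := A) {()} (fun _ => lam) (fun _ => c) (by simpa using hlam)

lemma zero : HasExpSeries A 0 0 := by
  simpa using of_finset_sum (A := A) (∅ : Finset Unit) (fun _ => 0) (fun _ => 0) (by simp)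

lemma add (hf : HasExpSeries A f r) (hg : HasExpSeries A g s) :
    HasExpSeries A (f + g) (r + s) := by
  obtain ⟨ι, l, c, hl, hc, hr, hs⟩ := hf
  obtain ⟨κ, l', c', hl', hc', hr', hs'⟩ := hg
  have key : HasSum (fun i : ι ⊕ κ => ‖Sum.elim c c' i‖) (∑' i, ‖c i‖ + ∑' i, ‖c' i‖) :=
    HasSum.sum hc.hasSum hc'.hasSum
  refine ⟨ι ⊕ κ, Sum.elim l l', Sum.elim c c', ?_, key.summable, ?_, HasSum.sum hs hs'⟩
  · rintro (i | i)
    exacts [hl i, hl' i]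
  · rw [key.tsum_eq]
    exact add_le_add hr hr'

lemma smul (hf : HasExpSeries A f r) (a : ℂ) : HasExpSeries A (a • f) (‖a‖ * r) := by
  obtain ⟨ι, l, c, hl, hc, hr, hs⟩ := hf
  refine ⟨ι, l, fun i => a * c i, hl, ?_, ?_, ?_⟩
  · simpa only [norm_mul] using hc.mul_left ‖a‖
  · simp only [norm_mul, tsum_mul_left]
    gcongr
  · simpa only [mul_smul] using hs.const_smul a

lemma neg (hf : HasExpSeries A f r) : HasExpSeries A (-f) r := by
  simpa using hf.smul (-1)

lemma sub (hf : HasExpSeries A f r) (hg : HasExpSeries A g s) :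
    HasExpSeries A (f - g) (r + s) := by
  simpa only [sub_eq_add_neg] using hf.add hg.neg

lemma sum {κ : Type*} (F : Finset κ) {f : κ → APB k} {r : κ → ℝ}
    (h : ∀ i ∈ F, HasExpSeries A (f i) (r i)) :
    HasExpSeries A (∑ i ∈ F, f i) (∑ i ∈ F, r i) := by
  classical
  induction F using Finset.induction_on with
  | empty => simpa using zero
  | insert a F ha ih =>
    rw [Finset.sum_insert ha, Finset.sum_insert ha]
    exact (h a (by simp)).add (ih fun i hi => h i (by simp [hi]))

lemma mul (hadd : ∀ x ∈ A, ∀ y ∈ A, x + y ∈ A) (hf : HasExpSeries A f r)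
    (hg : HasExpSeries A g s) : HasExpSeries A (f * g) (r * s) := by
  obtain ⟨ι, l, c, hl, hc, hr, hs⟩ := hf
  obtain ⟨κ, l', c', hl', hc', hr', hs'⟩ := hg
  have hsum : Summable fun x : ι × κ => ‖c x.1 * c' x.2‖ := hc.mul_norm hc'
  have key : HasSum (fun x : ι × κ => ‖c x.1 * c' x.2‖) ((∑' i, ‖c i‖) * ∑' i, ‖c' i‖) := by
    simp only [norm_mul] at hsum ⊢
    exact hc.hasSum.mul hc'.hasSum hsum
  have hfun : (fun x : ι × κ => (c x.1 • _root_.apExp k (l x.1)) *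
      (c' x.2 • _root_.apExp k (l' x.2))) =
      fun x => (c x.1 * c' x.2) • _root_.apExp k (l x.1 + l' x.2) := by
    ext1 x
    rw [apExp_add, smul_mul_smul_comm]
  refine ⟨ι × κ, fun x => l x.1 + l' x.2, fun x => c x.1 * c' x.2,
    fun x => hadd _ (hl _) _ (hl' _), hsum, ?_, ?_⟩
  · rw [key.tsum_eq]
    exact mul_le_mul hr hr' (tsum_nonneg fun i => norm_nonneg _)
      ((tsum_nonneg fun i => norm_nonneg _).trans hr)
  · have := hs.mul hs' (by
      rw [hfun]
      exact hsum.of_norm_bounded fun x => norm_smul_apExp_le _ _)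
    rwa [hfun] at this

lemma one (h0 : (0 : Fin k → ℝ) ∈ A) : HasExpSeries A 1 1 := by
  simpa [apExp_zero] using apExp h0 1

lemma pow (h0 : (0 : Fin k → ℝ) ∈ A) (hadd : ∀ x ∈ A, ∀ y ∈ A, x + y ∈ A)
    (hf : HasExpSeries A f r) (n : ℕ) : HasExpSeries A (f ^ n) (r ^ n) := by
  induction n with
  | zero => simpa using one h0
  | succ n ih =>
    rw [pow_succ, pow_succ]
    exact ih.mul hadd hf

/-- Neumann series: `1 - f` is invertible when the coefficients of `f` have mass less than `1`. -/
lemma exists_inverse (h0 : (0 : Fin k → ℝ) ∈ A) (hadd : ∀ x ∈ A, ∀ y ∈ A, x + y ∈ A)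
    (hf : HasExpSeries A f r) (hr : r < 1) :
    ∃ g, g * (1 - f) = 1 ∧ ∃ s, HasExpSeries A g s := by
  have hgeom := summable_geometric_of_lt_one hf.nonneg hr
  have hfn : ‖f‖ < 1 := hf.norm_le.trans_lt hr
  choose ι l c hl hc hrn hs using fun n => hf.pow h0 hadd n
  have hsum : Summable fun x : Σ n, ι n => ‖c x.1 x.2‖ := by
    refine (summable_sigma_of_nonneg fun _ => norm_nonneg _).2 ⟨hc, ?_⟩
    exact hgeom.of_nonneg_of_le (fun n => tsum_nonneg fun _ => norm_nonneg _) hrn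
  have hsum' : Summable fun x : Σ n, ι n => c x.1 x.2 • _root_.apExp k (l x.1 x.2) :=
    hsum.of_norm_bounded fun x => norm_smul_apExp_le _ _
  have hpow : HasSum (fun n => f ^ n) (∑' x : Σ n, ι n, c x.1 x.2 • _root_.apExp k (l x.1 x.2)) :=
    hsum'.hasSum.sigma hs
  refine ⟨_, ?_, _, Σ n, ι n, fun x => l x.1 x.2, fun x => c x.1 x.2, fun x => hl _ _, hsum,
    le_rfl, hsum'.hasSum⟩
  rw [← hpow.tsum_eq]
  exact geom_series_mul_neg f hfn

end HasExpSeries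

/-- The algebra of sums of absolutely convergent exponential series with frequencies in `A`. -/
def expSeriesAlg (A : AddSubmonoid (Fin k → ℝ)) : Subalgebra ℂ (APB k) where
  carrier := {f | ∃ r, HasExpSeries (A : Set (Fin k → ℝ)) f r}
  mul_mem' := by
    rintro f g ⟨r, hf⟩ ⟨s, hg⟩
    exact ⟨_, hf.mul (fun x hx y hy => A.add_mem hx hy) hg⟩
  add_mem' := by
    rintro f g ⟨r, hf⟩ ⟨s, hg⟩
    exact ⟨_, hf.add hg⟩
  algebraMap_mem' a := by
    rw [Algebra.algebraMap_eq_smul_one]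
    exact ⟨_, (HasExpSeries.one A.zero_mem).smul a⟩

lemma isUnit_of_hasExpSeries_one_sub {A : AddSubmonoid (Fin k → ℝ)} (u : expSeriesAlg A) {r : ℝ}
    (hu : HasExpSeries (A : Set (Fin k → ℝ)) (1 - u : APB k) r) (hr : r < 1) : IsUnit u := by
  obtain ⟨g, hg, hgs⟩ :=
    hu.exists_inverse A.zero_mem (fun x hx y hy => A.add_mem hx hy) hr
  refine IsUnit.of_mul_eq_one_right ⟨g, hgs⟩ (Subtype.ext ?_)
  simpa using hg

/-! ### Density of trigonometric polynomials and means -/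

lemma apExp_mem_APalg (lam : Fin k → ℝ) : apExp k lam ∈ APalg k :=
  Subalgebra.le_topologicalClosure _ (Algebra.subset_adjoin ⟨lam, rfl⟩)

lemma isClosed_APalg : IsClosed (APalg k : Set (APB k)) :=
  Subalgebra.isClosed_topologicalClosure _

/-- To prove a property of all almost periodic functions it suffices to treat exponentials, linear
combinations and uniform limits. -/
lemma APalg_induction {P : APB k → Prop} (hexp : ∀ lam, P (apExp k lam))
    (hadd : ∀ f g, P f → P g → P (f + g)) (hsmul : ∀ (c : ℂ) f, P f → P (c • f))
    (hlim : ∀ f, (∀ ε > 0, ∃ p, P p ∧ ‖f - p‖ < ε) → P f) {f : APB k} (hf : f ∈ APalg k) :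
    P f := by
  have hpoly : ∀ p ∈ Algebra.adjoin ℂ (Set.range (apExp k)), P p := by
    intro p hp
    rw [← Subalgebra.mem_toSubmodule, Algebra.adjoin_eq_span] at hp
    have hcl : ((Submonoid.closure (Set.range (apExp k)) : Submonoid (APB k)) : Set (APB k)) ⊆
        Set.range (apExp k) := by
      intro g hg
      induction hg using Submonoid.closure_induction with
      | mem x hx => exact hx
      | one => exact ⟨0, apExp_zero⟩
      | mul x y _ _ hx hy =>
        obtain ⟨lam, rfl⟩ := hx
        obtain ⟨mu, rfl⟩ := hy
        exact ⟨lam + mu, apExp_add _ _⟩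
    induction hp using Submodule.span_induction with
    | mem x hx =>
      obtain ⟨lam, rfl⟩ := hcl hx
      exact hexp lam
    | zero => simpa using hsmul 0 _ (hexp 0)
    | add x y _ _ hx hy => exact hadd x y hx hy
    | smul a x _ hx => exact hsmul a x hx
  refine hlim f fun ε hε => ?_
  obtain ⟨p, hp, hfp⟩ := Metric.mem_closure_iff.1 hf ε hε
  exact ⟨p, hpoly p hp, by rwa [← dist_eq_norm]⟩

/-- The mean of `f` over the box `[-T,T]^k`. -/
def boxMean (T : ℝ) (f : APB k) : ℂ :=
  (((2 * T) ^ k : ℝ) : ℂ)⁻¹ * ∫ x in Set.Icc (fun _ => -T : Fin k → ℝ) (fun _ => T), f x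

lemma bohrCoeff_eq_limUnder_boxMean (f : APB k) (lam : Fin k → ℝ) :
    bohrCoeff k f lam = limUnder atTop fun T => boxMean T (apExp k (-lam) * f) := by
  simp [bohrCoeff, boxMean, apExp_apply]

lemma integrableOn_box (T : ℝ) (f : APB k) :
    IntegrableOn f (Set.Icc (fun _ => -T : Fin k → ℝ) (fun _ => T)) :=
  f.continuous.continuousOn.integrableOn_compact isCompact_Icc

lemma boxMean_add (T : ℝ) (f g : APB k) : boxMean T (f + g) = boxMean T f + boxMean T g := by
  simp only [boxMean, BoundedContinuousFunction.add_apply]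
  rw [integral_add (integrableOn_box T f) (integrableOn_box T g), mul_add]

lemma boxMean_smul (T : ℝ) (c : ℂ) (f : APB k) : boxMean T (c • f) = c * boxMean T f := by
  simp only [boxMean, BoundedContinuousFunction.smul_apply, smul_eq_mul]
  rw [integral_const_mul]
  ring

lemma boxMean_sub (T : ℝ) (f g : APB k) : boxMean T (f - g) = boxMean T f - boxMean T g := by
  have h : f - g = f + (-1 : ℂ) • g := by simp [sub_eq_add_neg]
  rw [h, boxMean_add, boxMean_smul]
  ring

lemma volume_real_box {T : ℝ} (hT : 0 < T) :
    volume.real (Set.Icc (fun _ => -T : Fin k → ℝ) (fun _ => T)) = (2 * T) ^ k := by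
  rw [Measure.real, Real.volume_Icc_pi]
  simp only [sub_neg_eq_add, Finset.prod_const, Finset.card_univ, Fintype.card_fin,
    ENNReal.toReal_pow]
  rw [ENNReal.toReal_ofReal (by linarith), two_mul]

lemma norm_boxMean_le {T : ℝ} (hT : 0 < T) (f : APB k) : ‖boxMean T f‖ ≤ ‖f‖ := by
  have hpos : 0 < (2 * T) ^ k := by positivity
  have h : ‖∫ x in Set.Icc (fun _ => -T : Fin k → ℝ) (fun _ => T), f x‖ ≤ ‖f‖ * (2 * T) ^ k := by
    rw [← volume_real_box hT]
    exact norm_setIntegral_le_of_norm_le_const isCompact_Icc.measure_lt_top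
      fun x _ => f.norm_coe_le_norm x
  rw [boxMean, norm_mul, norm_inv, Complex.norm_real, Real.norm_of_nonneg hpos.le,
    inv_mul_le_iff₀ hpos, mul_comm]
  exact h

/-- `f` has mean value `L`. -/
def HasMean (f : APB k) (L : ℂ) : Prop := Tendsto (fun T => boxMean T f) atTop (𝓝 L)

namespace HasMean

variable {f g : APB k} {L M : ℂ}

lemma add (hf : HasMean f L) (hg : HasMean g M) : HasMean (f + g) (L + M) := by
  simpa only [HasMean, boxMean_add] using Tendsto.add hf hg

lemma smul (hf : HasMean f L) (c : ℂ) : HasMean (c • f) (c * L) := by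
  simpa only [HasMean, boxMean_smul] using Tendsto.const_mul c hf

lemma sub (hf : HasMean f L) (hg : HasMean g M) : HasMean (f - g) (L - M) := by
  simpa only [HasMean, boxMean_sub] using Tendsto.sub hf hg

lemma sum {κ : Type*} (F : Finset κ) {f : κ → APB k} {L : κ → ℂ}
    (h : ∀ i ∈ F, HasMean (f i) (L i)) : HasMean (∑ i ∈ F, f i) (∑ i ∈ F, L i) := by
  classical
  induction F using Finset.induction_on with
  | empty =>
    simp [HasMean, boxMean]
  | insert a F ha ih =>
    rw [Finset.sum_insert ha, Finset.sum_insert ha]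
    exact (h a (by simp)).add (ih fun i hi => h i (by simp [hi]))

lemma of_approx (h : ∀ ε > 0, ∃ p M, HasMean p M ∧ ‖f - p‖ < ε ∧ ‖L - M‖ < ε) : HasMean f L := by
  rw [HasMean, Metric.tendsto_nhds]
  intro ε hε
  obtain ⟨p, M, hp, hfp, hLM⟩ := h (ε / 3) (by positivity)
  filter_upwards [Metric.tendsto_nhds.1 hp (ε / 3) (by positivity), eventually_gt_atTop 0]
    with T hT hT0
  have h1 : ‖boxMean T f - boxMean T p‖ < ε / 3 := by
    rw [← boxMean_sub]
    exact (norm_boxMean_le hT0 _).trans_lt hfp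
  rw [dist_eq_norm] at hT ⊢
  calc ‖boxMean T f - L‖
      = ‖(boxMean T f - boxMean T p) + (boxMean T p - M) - (L - M)‖ := by congr 1; ring
    _ ≤ ‖boxMean T f - boxMean T p‖ + ‖boxMean T p - M‖ + ‖L - M‖ :=
        (norm_sub_le _ _).trans (add_le_add_left (norm_add_le _ _) _)
    _ < ε := by linarith

end HasMean

lemma exists_hasMean_of_approx {f : APB k}
    (h : ∀ ε > 0, ∃ p, (∃ M, HasMean p M) ∧ ‖f - p‖ < ε) : ∃ L, HasMean f L := by
  refine cauchySeq_tendsto_of_complete (Metric.cauchySeq_iff'.2 fun ε hε => ?_)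
  obtain ⟨p, ⟨M, hp⟩, hfp⟩ := h (ε / 4) (by positivity)
  obtain ⟨N, hN⟩ := eventually_atTop.1
    ((Metric.tendsto_nhds.1 hp (ε / 4) (by positivity)).and (eventually_gt_atTop 0))
  have key : ∀ T ≥ N, ‖boxMean T f - M‖ < ε / 2 := by
    intro T hT
    obtain ⟨h2, hT0⟩ := hN T hT
    have h1 : ‖boxMean T f - boxMean T p‖ < ε / 4 := by
      rw [← boxMean_sub]
      exact (norm_boxMean_le hT0 _).trans_lt hfp
    rw [dist_eq_norm] at h2
    have := norm_sub_le_norm_sub_add_norm_sub (boxMean T f) (boxMean T p) M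
    linarith
  refine ⟨N, fun T hT => ?_⟩
  have h1 := key T hT
  have h2 := key N le_rfl
  have := norm_sub_le_norm_sub_add_norm_sub (boxMean T f) M (boxMean N f)
  rw [norm_sub_rev] at h2
  rw [dist_eq_norm]
  linarith

lemma tendsto_interval_mean_exp (a : ℝ) :
    Tendsto (fun T : ℝ => ((2 * T : ℝ) : ℂ)⁻¹ *
      ∫ x in Set.Icc (-T) T, Complex.exp (Complex.I * ((a * x : ℝ) : ℂ)))
      atTop (𝓝 (if a = 0 then 1 else 0)) := by
  split_ifs with ha
  · subst ha
    refine tendsto_const_nhds.congr' ?_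
    filter_upwards [eventually_gt_atTop 0] with T hT
    have : (T : ℂ) ≠ 0 := by exact_mod_cast hT.ne'
    simp [max_eq_left (show (0 : ℝ) ≤ T + T by linarith)]
    field_simp
    ring
  · have hc : Complex.I * (a : ℂ) ≠ 0 := by simp [ha]
    have hlim : Tendsto (fun T : ℝ => (2 * T)⁻¹ * (2 / |a|)) atTop (𝓝 0) := by
      have : Tendsto (fun T : ℝ => (2 * T)⁻¹) atTop (𝓝 0) :=
        tendsto_inv_atTop_zero.comp (tendsto_id.const_mul_atTop two_pos)
      simpa using this.mul_const (2 / |a|)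
    refine squeeze_zero_norm' ?_ hlim
    filter_upwards [eventually_gt_atTop 0] with T hT
    rw [integral_Icc_eq_integral_Ioc, ← intervalIntegral.integral_of_le (by linarith)]
    have hfun : ∀ x : ℝ, Complex.exp (Complex.I * ((a * x : ℝ) : ℂ)) =
        Complex.exp ((Complex.I * a) * x) := by
      intro x
      push_cast
      ring_nf
    simp only [hfun]
    rw [integral_exp_mul_complex hc, norm_mul, norm_inv, Complex.norm_real,
      Real.norm_of_nonneg (by linarith : 0 ≤ 2 * T), norm_div]
    have h1 : ∀ x : ℝ, ‖Complex.exp (Complex.I * a * x)‖ = 1 := by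
      intro x
      rw [← hfun, mul_comm, Complex.norm_exp_ofReal_mul_I]
    have h2 : ‖Complex.I * (a : ℂ)‖ = |a| := by simp
    rw [h2]
    gcongr
    refine (norm_sub_le _ _).trans ?_
    rw [h1, h1]
    norm_num

lemma hasMean_apExp (lam : Fin k → ℝ) : HasMean (apExp k lam) (if lam = 0 then 1 else 0) := by
  classical
  have hbox : ∀ T : ℝ, boxMean T (apExp k lam) = ∏ j, (((2 * T : ℝ) : ℂ)⁻¹ *
      ∫ x in Set.Icc (-T) T, Complex.exp (Complex.I * ((lam j * x : ℝ) : ℂ))) := by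
    intro T
    have hprod : ∀ x : Fin k → ℝ, apExp k lam x =
        ∏ j, Complex.exp (Complex.I * ((lam j * x j : ℝ) : ℂ)) := by
      intro x
      rw [apExp_apply, ← Complex.exp_sum, ← Finset.mul_sum, Complex.ofReal_sum]
    rw [boxMean, ← Set.pi_univ_Icc, volume_pi, Measure.restrict_pi_pi]
    simp only [hprod]
    rw [integral_fintype_prod_eq_prod
      (fun j (x : ℝ) => Complex.exp (Complex.I * ((lam j * x : ℝ) : ℂ))),
      Finset.prod_mul_distrib, Finset.prod_const, Finset.card_univ, Fintype.card_fin,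
      Complex.ofReal_pow, inv_pow]
  have hlim : (if lam = 0 then (1 : ℂ) else 0) = ∏ j, (if lam j = 0 then (1 : ℂ) else 0) := by
    rw [Finset.prod_ite_zero]
    simp [funext_iff]
  rw [HasMean, hlim]
  simp only [hbox]
  exact tendsto_finsetProd _ fun j _ => tendsto_interval_mean_exp (lam j)

lemma exists_hasMean {f : APB k} (hf : f ∈ APalg k) : ∃ L, HasMean f L := by
  refine APalg_induction (P := fun f => ∃ L, HasMean f L) (fun lam => ⟨_, hasMean_apExp lam⟩) ?_ ?_
    (fun f h => exists_hasMean_of_approx h) hf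
  · rintro f g ⟨L, hL⟩ ⟨M, hM⟩
    exact ⟨_, hL.add hM⟩
  · rintro c f ⟨L, hL⟩
    exact ⟨_, hL.smul c⟩

lemma bohrCoeff_eq_of_hasMean {f : APB k} {lam : Fin k → ℝ} {L : ℂ}
    (h : HasMean (apExp k (-lam) * f) L) : bohrCoeff k f lam = L := by
  rw [bohrCoeff_eq_limUnder_boxMean]
  exact h.limUnder_eq

lemma hasMean_bohrCoeff {f : APB k} (hf : f ∈ APalg k) (lam : Fin k → ℝ) :
    HasMean (apExp k (-lam) * f) (bohrCoeff k f lam) := by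
  obtain ⟨L, hL⟩ := exists_hasMean ((APalg k).mul_mem (apExp_mem_APalg (-lam)) hf)
  rwa [bohrCoeff_eq_of_hasMean hL]

lemma hasMean_map_zero (Φ : APB k →L[ℂ] APB k) (hΦ : ∀ lam, HasMean (Φ (apExp k lam)) 0)
    {f : APB k} (hf : f ∈ APalg k) : HasMean (Φ f) 0 := by
  refine APalg_induction (P := fun f => HasMean (Φ f) 0) hΦ ?_ ?_ ?_ hf
  · intro f g hf hg
    simpa using hf.add hg
  · intro c f hf
    simpa using hf.smul c
  · intro f h
    refine HasMean.of_approx fun ε hε => ?_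
    obtain ⟨p, hp, hfp⟩ := h (ε / (‖Φ‖ + 1)) (by positivity)
    refine ⟨Φ p, 0, hp, ?_, by simpa using hε⟩
    rw [← map_sub]
    calc ‖Φ (f - p)‖ ≤ ‖Φ‖ * ‖f - p‖ := Φ.le_opNorm _
      _ ≤ (‖Φ‖ + 1) * ‖f - p‖ := by gcongr; linarith
      _ < (‖Φ‖ + 1) * (ε / (‖Φ‖ + 1)) := by gcongr
      _ = ε := by field_simp

/-! ### The uniqueness theorem for almost periodic functions -/

/-- The reflection `f ↦ f (y - ·)`. -/
def reflectL (y : Fin k → ℝ) : APB k →L[ℂ] APB k :=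
  LinearMap.mkContinuous
    { toFun := fun f => f.compContinuous ⟨fun x => y - x, by fun_prop⟩
      map_add' := fun _ _ => rfl
      map_smul' := fun _ _ => rfl } 1 fun f => by
    rw [one_mul]
    exact (BoundedContinuousFunction.norm_le (norm_nonneg _)).2 fun x => f.norm_coe_le_norm _

lemma reflectL_apply (y : Fin k → ℝ) (f : APB k) (x : Fin k → ℝ) : reflectL y f x = f (y - x) := rfl

lemma norm_reflectL_le (y : Fin k → ℝ) (f : APB k) : ‖reflectL y f‖ ≤ ‖f‖ :=
  (BoundedContinuousFunction.norm_le (norm_nonneg _)).2 fun _ => f.norm_coe_le_norm _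

lemma reflectL_apExp (y lam : Fin k → ℝ) :
    reflectL y (apExp k lam) = apExp k lam y • apExp k (-lam) := by
  ext x
  simp only [reflectL_apply, BoundedContinuousFunction.smul_apply, apExp_apply, smul_eq_mul,
    ← Complex.exp_add, Pi.sub_apply, Pi.neg_apply, mul_sub, Finset.sum_sub_distrib, neg_mul,
    Finset.sum_neg_distrib]
  push_cast
  ring_nf

lemma totallyBounded_range_reflectL {f : APB k} (hf : f ∈ APalg k) :
    TotallyBounded (Set.range fun y => reflectL y f) := by
  refine APalg_induction (P := fun f => TotallyBounded (Set.range fun y => reflectL y f))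
    ?_ ?_ ?_ ?_ hf
  · intro lam
    have hK : IsCompact ((fun z : ℂ => z • apExp k (-lam)) '' Metric.closedBall 0 1) :=
      (isCompact_closedBall 0 1).image (by fun_prop)
    refine hK.totallyBounded.subset ?_
    rintro _ ⟨y, rfl⟩
    exact ⟨apExp k lam y, by simp [norm_apExp_apply], (reflectL_apExp y lam).symm⟩
  · intro f g hf hg
    have hK := hf.closure.isCompact_of_isClosed isClosed_closure |>.add
      (hg.closure.isCompact_of_isClosed isClosed_closure)
    refine hK.totallyBounded.subset ?_
    rintro _ ⟨y, rfl⟩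
    exact Set.mem_add.2 ⟨_, subset_closure ⟨y, rfl⟩, _, subset_closure ⟨y, rfl⟩,
      (map_add (reflectL y) f g).symm⟩
  · intro c f hf
    refine (hf.image (uniformContinuous_const_smul c)).subset ?_
    rintro _ ⟨y, rfl⟩
    exact ⟨_, ⟨y, rfl⟩, (map_smul (reflectL y) c f).symm⟩
  · intro f h
    rw [Metric.totallyBounded_iff]
    intro ε hε
    obtain ⟨p, hp, hfp⟩ := h (ε / 2) (by positivity)
    obtain ⟨t, ht, hcov⟩ := Metric.totallyBounded_iff.1 hp (ε / 2) (by positivity)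
    refine ⟨t, ht, ?_⟩
    rintro _ ⟨y, rfl⟩
    obtain ⟨q, hq, hyq⟩ := Set.mem_iUnion₂.1 (hcov ⟨y, rfl⟩)
    refine Set.mem_iUnion₂.2 ⟨q, hq, ?_⟩
    rw [Metric.mem_ball, dist_eq_norm] at hyq ⊢
    have h1 : ‖reflectL y f - reflectL y p‖ < ε / 2 := by
      rw [← map_sub]
      exact (norm_reflectL_le y _).trans_lt hfp
    have := norm_sub_le_norm_sub_add_norm_sub (reflectL y f) (reflectL y p) q
    linarith

lemma hasMean_reflectL {f : APB k} (hf : f ∈ APalg k) {L : ℂ} (hL : HasMean f L)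
    (y : Fin k → ℝ) : HasMean (reflectL y f) L := by
  have hdiff : HasMean ((ContinuousLinearMap.id ℂ (APB k) - reflectL y) f) 0 := by
    refine hasMean_map_zero _ (fun lam => ?_) hf
    have h := (hasMean_apExp lam).sub ((hasMean_apExp (-lam)).smul (apExp k lam y))
    have hz : (if lam = 0 then (1 : ℂ) else 0) -
        apExp k lam y * (if -lam = 0 then (1 : ℂ) else 0) = 0 := by
      by_cases hlam : lam = 0
      · simp [hlam, apExp_zero]
      · simp [hlam]
    rw [hz] at h
    simpa [reflectL_apExp] using h
  simpa using hL.sub hdiff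

lemma star_mem_APalg {f : APB k} (hf : f ∈ APalg k) : star f ∈ APalg k := by
  refine APalg_induction (P := fun f => star f ∈ APalg k) ?_ ?_ ?_ ?_ hf
  · intro lam
    rw [star_apExp]
    exact apExp_mem_APalg _
  · intro f g hf hg
    rw [star_add]
    exact (APalg k).add_mem hf hg
  · intro c f hf
    rw [star_smul]
    exact (APalg k).smul_mem hf _
  · intro f h
    rw [← SetLike.mem_coe, ← isClosed_APalg.closure_eq, Metric.mem_closure_iff]
    intro ε hε
    obtain ⟨p, hp, hfp⟩ := h ε hε
    exact ⟨_, hp, by rwa [dist_eq_norm, ← star_sub, norm_star]⟩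

lemma le_re_boxMean {T δ : ℝ} (hT : 0 < T) {f : APB k} (hf : ∀ x, δ ≤ (f x).re) :
    δ ≤ (boxMean T f).re := by
  have hpos : 0 < (2 * T) ^ k := by positivity
  have hint := integrableOn_box T f
  have h := setIntegral_ge_of_const_le (μ := volume) (f := fun x => RCLike.re (f x)) (c := δ)
    (measurableSet_Icc (a := (fun _ => -T : Fin k → ℝ)) (b := fun _ => T))
    isCompact_Icc.measure_lt_top.ne (fun x _ => hf x) hint.re
  rw [integral_re hint, volume_real_box hT, smul_eq_mul] at h
  rw [boxMean, ← Complex.ofReal_inv, Complex.re_ofReal_mul, le_inv_mul_iff₀ hpos]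
  exact h

/-- An almost periodic function of vanishing mean square is zero. -/
lemma eq_zero_of_hasMean_star_mul_self {f : APB k} (hf : f ∈ APalg k)
    (h : HasMean (star f * f) 0) : f = 0 := by
  set g := star f * f with hg
  have hgval : ∀ x, (g x).re = ‖f x‖ ^ 2 := by
    intro x
    rw [hg, BoundedContinuousFunction.mul_apply, BoundedContinuousFunction.star_apply,
      RCLike.star_def, Complex.conj_mul']
    norm_cast
  have hgmem : g ∈ APalg k := (APalg k).mul_mem (star_mem_APalg hf) hf
  by_contra hne
  obtain ⟨x₀, hx₀⟩ : ∃ x, f x ≠ 0 := by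
    by_contra! hall
    exact hne (BoundedContinuousFunction.ext hall)
  have hδ : 0 < ‖f x₀‖ ^ 2 := by positivity
  set δ := ‖f x₀‖ ^ 2 with hδdef
  obtain ⟨t, hts, htfin, hcov⟩ := Metric.finite_approx_of_totallyBounded
    (totallyBounded_range_reflectL hgmem) (δ / 2) (by positivity)
  have hnet : ∀ q : APB k, ∃ y, q ∈ t → reflectL y g = q := by
    intro q
    by_cases hq : q ∈ t
    · obtain ⟨y, hy⟩ := hts hq
      exact ⟨y, fun _ => hy⟩
    · exact ⟨0, fun h => absurd h hq⟩
  choose y hy using hnet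
  have hmean : HasMean (∑ q ∈ htfin.toFinset, reflectL (y q + x₀) g) 0 := by
    simpa using HasMean.sum htfin.toFinset fun q _ => hasMean_reflectL hgmem h (y q + x₀)
  have hlow : ∀ x, δ / 2 ≤ ((∑ q ∈ htfin.toFinset, reflectL (y q + x₀) g) x).re := by
    intro x
    obtain ⟨q, hq, hxq⟩ := Set.mem_iUnion₂.1 (hcov ⟨x, rfl⟩)
    rw [Metric.mem_ball, dist_eq_norm, ← hy q hq] at hxq
    have h1 := ((reflectL x g - reflectL (y q) g).norm_coe_le_norm (x - x₀)).trans_lt hxq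
    rw [BoundedContinuousFunction.sub_apply, reflectL_apply, reflectL_apply, sub_sub_cancel,
      show y q - (x - x₀) = y q + x₀ - x by abel] at h1
    have h2 := (Complex.abs_re_le_norm _).trans_lt h1
    rw [Complex.sub_re, hgval x₀] at h2
    have h3 : δ / 2 ≤ (reflectL (y q + x₀) g x).re := by
      rw [reflectL_apply]
      linarith [(abs_lt.1 h2).2]
    rw [BoundedContinuousFunction.sum_apply, Complex.re_sum]
    refine h3.trans (Finset.single_le_sum
      (f := fun q => (reflectL (y q + x₀) g x).re) (fun p _ => ?_) (htfin.mem_toFinset.2 hq))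
    simp only [reflectL_apply, hgval]
    positivity
  have hre := (Complex.continuous_re.tendsto _).comp hmean
  have := ge_of_tendsto hre
    ((eventually_gt_atTop 0).mono fun T hT => le_re_boxMean hT hlow)
  rw [Complex.zero_re] at this
  linarith

/-- An almost periodic function whose Bohr-Fourier coefficients all vanish is zero. -/
lemma eq_zero_of_bohrCoeff_eq_zero {f : APB k} (hf : f ∈ APalg k)
    (h : ∀ lam, bohrCoeff k f lam = 0) : f = 0 := by
  refine eq_zero_of_hasMean_star_mul_self hf ?_
  have := hasMean_map_zero (ContinuousLinearMap.mul ℂ (APB k) f) (fun lam => ?_)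
    (star_mem_APalg hf)
  · simpa [mul_comm] using this
  · have := hasMean_bohrCoeff hf (-lam)
    rw [h, neg_neg] at this
    simpa [mul_comm] using this

/-! ### Exponential series and Bohr-Fourier coefficients -/

lemma mem_APalg_of_hasSum {ι : Type*} {l : ι → Fin k → ℝ} {c : ι → ℂ} {f : APB k}
    (hs : HasSum (fun i => c i • apExp k (l i)) f) : f ∈ APalg k :=
  isClosed_APalg.mem_of_tendsto hs (Eventually.of_forall fun _ =>
    (APalg k).sum_mem fun _ _ => (APalg k).smul_mem (apExp_mem_APalg _) _)

lemma bohrCoeff_of_hasSum {ι : Type*} {l : ι → Fin k → ℝ} {c : ι → ℂ} {f : APB k}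
    (hc : Summable fun i => ‖c i‖) (hs : HasSum (fun i => c i • apExp k (l i)) f)
    (mu : Fin k → ℝ) : bohrCoeff k f mu = ∑' i, if l i = mu then c i else 0 := by
  refine bohrCoeff_eq_of_hasMean (HasMean.of_approx fun ε hε => ?_)
  have hsum : Summable fun i => if l i = mu then c i else 0 :=
    hc.of_norm_bounded fun i => by split_ifs <;> simp
  obtain ⟨F, hF1, hF2⟩ := ((Metric.tendsto_nhds.1 hs ε hε).and
    (Metric.tendsto_nhds.1 hsum.hasSum ε hε)).exists
  rw [dist_comm, dist_eq_norm] at hF1 hF2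
  refine ⟨apExp k (-mu) * ∑ i ∈ F, c i • apExp k (l i), ∑ i ∈ F, if l i = mu then c i else 0,
    ?_, ?_, hF2⟩
  · rw [Finset.mul_sum]
    refine HasMean.sum F fun i _ => ?_
    have h := (hasMean_apExp (-mu + l i)).smul (c i)
    have hif : (-mu + l i = 0) = (l i = mu) := propext (neg_add_eq_zero.trans eq_comm)
    rw [apExp_add] at h
    simpa [hif] using h
  · rw [← mul_sub]
    calc _ ≤ ‖apExp k (-mu)‖ * ‖f - ∑ i ∈ F, c i • apExp k (l i)‖ := norm_mul_le _ _
      _ ≤ 1 * ‖f - ∑ i ∈ F, c i • apExp k (l i)‖ := by gcongr; exact norm_apExp_le _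
      _ < ε := by rwa [one_mul]

lemma HasExpSeries.sum_norm_bohrCoeff_le {A : Set (Fin k → ℝ)} {f : APB k} {r : ℝ}
    (hf : HasExpSeries A f r) (F : Finset (Fin k → ℝ)) : ∑ mu ∈ F, ‖bohrCoeff k f mu‖ ≤ r := by
  obtain ⟨ι, l, c, hl, hc, hr, hs⟩ := hf
  have hsum : ∀ mu, Summable fun i => if l i = mu then ‖c i‖ else 0 := fun mu =>
    hc.of_norm_bounded fun i => by split_ifs <;> simp
  calc ∑ mu ∈ F, ‖bohrCoeff k f mu‖
      ≤ ∑ mu ∈ F, ∑' i, (if l i = mu then ‖c i‖ else 0) := by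
        refine Finset.sum_le_sum fun mu _ => ?_
        rw [bohrCoeff_of_hasSum hc hs]
        exact tsum_of_norm_bounded (hsum mu).hasSum fun i => by split_ifs <;> simp
    _ = ∑' i, ∑ mu ∈ F, (if l i = mu then ‖c i‖ else 0) :=
        (Summable.tsum_finsetSum fun mu _ => hsum mu).symm
    _ ≤ ∑' i, ‖c i‖ := by
        refine Summable.tsum_le_tsum (fun i => ?_) (summable_sum fun mu _ => hsum mu) hc
        rw [Finset.sum_ite_eq]
        split_ifs <;> simp
    _ ≤ r := hr

lemma HasExpSeries.apwMem {A : Set (Fin k → ℝ)} {f : APB k} {r : ℝ}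
    (hf : HasExpSeries A f r) : APWmem k A f := by
  have hf' := hf
  obtain ⟨ι, l, c, hl, hc, hr, hs⟩ := hf'
  refine ⟨⟨mem_APalg_of_hasSum hs, fun mu hmu => ?_⟩,
    summable_of_sum_le (fun _ => norm_nonneg _) hf.sum_norm_bohrCoeff_le⟩
  by_contra hA
  refine hmu ?_
  rw [bohrCoeff_of_hasSum hc hs]
  have : ∀ i, l i ≠ mu := fun i hi => hA (hi ▸ hl i)
  simp [this]

lemma APWmem.hasExpSeries {A : Set (Fin k → ℝ)} {f : APB k} (hf : APWmem k A f) :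
    ∃ r, HasExpSeries A f r := by
  obtain ⟨⟨hmem, hspec⟩, hsum⟩ := hf
  have hs : Summable fun lam => bohrCoeff k f lam • apExp k lam :=
    hsum.of_norm_bounded fun _ => norm_smul_apExp_le _ _
  have heq : f = ∑' lam, bohrCoeff k f lam • apExp k lam := by
    rw [← sub_eq_zero]
    refine eq_zero_of_bohrCoeff_eq_zero
      ((APalg k).sub_mem hmem (mem_APalg_of_hasSum hs.hasSum)) fun mu => ?_
    refine bohrCoeff_eq_of_hasMean ?_
    have h := (hasMean_bohrCoeff hmem mu).sub
      (hasMean_bohrCoeff (mem_APalg_of_hasSum hs.hasSum) mu)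
    rw [bohrCoeff_of_hasSum hsum hs.hasSum, tsum_ite_eq, sub_self, ← mul_sub] at h
    exact h
  have hsub := hs.hasSum
  rw [← heq] at hsub
  have hsupp : Function.support (fun lam => bohrCoeff k f lam • apExp k lam) ⊆ A := by
    intro lam hlam
    refine hspec fun h0 => hlam ?_
    simp [h0]
  exact ⟨_, A, Subtype.val, fun i => bohrCoeff k f i, fun i => i.2, hsum.subtype A, le_rfl,
    (hasSum_subtype_iff_of_support_subset hsupp).2 hsub⟩

lemma HasExpSeries.exists_truncation {A : Set (Fin k → ℝ)} {f : APB k} {r ε : ℝ}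
    (hf : HasExpSeries A f r) (hε : 0 < ε) :
    ∃ (F : Finset (Fin k → ℝ)) (p : APB k), ↑F ⊆ A ∧
      p ∈ Submodule.span ℂ (_root_.apExp k '' F) ∧ HasExpSeries A (f - p) ε := by
  classical
  obtain ⟨ι, l, c, hl, hc, hr, hs⟩ := hf
  obtain ⟨G, hG⟩ := (Metric.tendsto_nhds.1
    (tendsto_tsum_compl_atTop_zero fun i => ‖c i‖) ε hε).exists
  rw [Real.dist_0_eq_abs] at hG
  refine ⟨G.image l, ∑ i ∈ G, c i • _root_.apExp k (l i), ?_, ?_, ?_⟩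
  · intro lam hlam
    obtain ⟨i, _, rfl⟩ := Finset.mem_image.1 (Finset.mem_coe.1 hlam)
    exact hl i
  · refine Submodule.sum_mem _ fun i hi => Submodule.smul_mem _ _ (Submodule.subset_span ?_)
    exact ⟨l i, Finset.mem_coe.2 (Finset.mem_image_of_mem l hi), rfl⟩
  · refine ⟨{i // i ∉ G}, fun i => l i, fun i => c i, fun i => hl i, hc.subtype _,
      (abs_lt.1 hG).2.le, ?_⟩
    refine (Finset.hasSum_compl_iff (f := fun i => c i • _root_.apExp k (l i)) G).2 ?_
    rwa [sub_add_cancel]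

lemma HasExpSeries.sum_norm_le {A : Set (Fin k → ℝ)} {r : ℝ} {κ : Type*} (F : Finset κ)
    {l : κ → Fin k → ℝ} (hl : Function.Injective l) (c : κ → ℂ)
    (hf : HasExpSeries A (∑ i ∈ F, c i • _root_.apExp k (l i)) r) : ∑ i ∈ F, ‖c i‖ ≤ r := by
  classical
  have hcoeff : ∀ j ∈ F, bohrCoeff k (∑ i ∈ F, c i • _root_.apExp k (l i) : APB k) (l j) = c j := by
    intro j hj
    have hs : HasSum (fun i : F => c i • _root_.apExp k (l i))
        (∑ i ∈ F, c i • _root_.apExp k (l i)) := by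
      rw [← Finset.sum_coe_sort F fun i => c i • _root_.apExp k (l i)]
      exact hasSum_fintype _
    rw [bohrCoeff_of_hasSum (hasSum_fintype _).summable hs, tsum_fintype]
    simp only [hl.eq_iff]
    rw [Finset.sum_coe_sort F fun i => if i = j then c i else 0]
    simp [hj]
  have h := hf.sum_norm_bohrCoeff_le (F.image l)
  rw [Finset.sum_image hl.injOn] at h
  rwa [Finset.sum_congr rfl fun j hj => by rw [hcoeff j hj]] at h

/-! ### Equivalence of rows under the general linear group -/

section RowEquiv

variable {n R : Type*} [Fintype n] [DecidableEq n] [CommRing R]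

/-- Two rows over `R` are equivalent if they lie in the same orbit of the general linear group. -/
def RowEquiv (a a' : n → R) : Prop := ∃ G : (Matrix n n R)ˣ, Matrix.vecMul a G.val = a'

namespace RowEquiv

lemma symm {a a' : n → R} (h : RowEquiv a a') : RowEquiv a' a := by
  obtain ⟨G, rfl⟩ := h
  exact ⟨G⁻¹, by rw [Matrix.vecMul_vecMul, Units.mul_inv, Matrix.vecMul_one]⟩

lemma trans {a a' a'' : n → R} (h : RowEquiv a a') (h' : RowEquiv a' a'') : RowEquiv a a'' := by
  obtain ⟨G, rfl⟩ := h
  obtain ⟨H, rfl⟩ := h'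
  exact ⟨G * H, by rw [Matrix.vecMul_vecMul, Units.val_mul]⟩

/-- Two unimodular rows with a common right inverse up to units are equivalent. -/
lemma of_isUnit_dotProduct {a a' b : n → R} (h : IsUnit (a ⬝ᵥ b)) (h' : IsUnit (a' ⬝ᵥ b)) :
    RowEquiv a a' := by
  obtain ⟨u, hu⟩ := h
  set c : n → R := (↑u⁻¹ : R) • b with hc
  have hac : a ⬝ᵥ c = 1 := by rw [hc, dotProduct_smul, ← hu, smul_eq_mul, Units.inv_mul]
  have hac' : IsUnit (a' ⬝ᵥ c) := by
    rw [hc, dotProduct_smul, smul_eq_mul]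
    exact (Units.isUnit _).mul h'
  have hdet : IsUnit (1 + Matrix.vecMulVec c (a' - a)).det := by
    rw [Matrix.vecMulVec_eq Unit, Matrix.det_one_add_replicateCol_mul_replicateRow,
      sub_dotProduct, hac]
    simpa using hac'
  obtain ⟨G, hG⟩ := (Matrix.isUnit_iff_isUnit_det _).2 hdet
  refine ⟨G, ?_⟩
  rw [hG, Matrix.vecMul_add, Matrix.vecMul_one, Matrix.vecMul_vecMulVec, hac]
  simp

/-- A nonzero row of scalars from a field is equivalent to a coordinate row. -/
lemma single_of_algebraMap {K : Type*} [Field K] [Algebra K R] {c : n → K} (hc : c ≠ 0) (i : n) :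
    RowEquiv (fun j => algebraMap K R (c j)) (Pi.single i 1) := by
  obtain ⟨d, hd, hdi⟩ : ∃ d : n → K, c ⬝ᵥ d ≠ 0 ∧ d i ≠ 0 := by
    by_cases hi : c i = 0
    · obtain ⟨j, hj⟩ := Function.ne_iff.1 hc
      have hij : i ≠ j := by
        rintro rfl
        exact hj hi
      exact ⟨Pi.single i 1 + Pi.single j 1, by simpa [dotProduct_add, hi] using hj,
        by simp [hij]⟩
    · exact ⟨Pi.single i 1, by simpa using hi, by simp⟩
  refine of_isUnit_dotProduct (b := fun j => algebraMap K R (d j)) ?_ ?_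
  · have : (fun j => algebraMap K R (c j)) ⬝ᵥ (fun j => algebraMap K R (d j)) =
        algebraMap K R (c ⬝ᵥ d) := by
      simp [dotProduct]
    rw [this]
    exact (IsUnit.mk0 _ hd).map _
  · rw [single_one_dotProduct]
    exact (IsUnit.mk0 _ hdi).map _

end RowEquiv

end RowEquiv

/-- Finitely many points of a halfspace are separated from the origin by a linear functional. -/
lemma IsHalfspace.exists_pos_functional {S : Set (Fin k → ℝ)} (hS : IsHalfspace k S)
    (F : Finset (Fin k → ℝ)) (hF : (F : Set (Fin k → ℝ)) ⊆ S) :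
    ∃ ω : (Fin k → ℝ) →L[ℝ] ℝ, ∀ lam ∈ F, lam ≠ 0 → 0 < ω lam := by
  have hzero : ∀ x ∈ S, ∀ y ∈ S, x + y = 0 → x = 0 := by
    intro x hx y hy hxy
    have : x ∈ S ∩ -S := ⟨hx, by rwa [Set.mem_neg, neg_eq_of_add_eq_zero_right hxy]⟩
    rwa [hS.inter] at this
  have hconv : Convex ℝ (S \ {0}) := by
    intro x hx y hy a b ha hb hab
    refine ⟨hS.add_mem _ (hS.smul_mem x hx.1 a ha) _ (hS.smul_mem y hy.1 b hb), fun h => ?_⟩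
    have hax := hzero _ (hS.smul_mem x hx.1 a ha) _ (hS.smul_mem y hy.1 b hb) h
    have hby := hzero _ (hS.smul_mem y hy.1 b hb) _ (hS.smul_mem x hx.1 a ha)
      (by rw [add_comm]; exact h)
    have ha0 := (smul_eq_zero.1 hax).resolve_right hx.2
    have hb0 := (smul_eq_zero.1 hby).resolve_right hy.2
    simp [ha0, hb0] at hab
  have hfin : ((F : Set (Fin k → ℝ)) \ {0}).Finite := F.finite_toSet.subset Set.sdiff_subset
  have hmem : (0 : Fin k → ℝ) ∉ convexHull ℝ ((F : Set (Fin k → ℝ)) \ {0}) := fun h =>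
    (convexHull_min (Set.sdiff_subset_sdiff_left hF) hconv h).2 rfl
  obtain ⟨ω, u, hu, hω⟩ := geometric_hahn_banach_point_closed (convex_convexHull ℝ _)
    (hfin.isClosed_convexHull ℝ) hmem
  rw [map_zero] at hu
  exact ⟨ω, fun lam hlam h => hu.trans (hω lam (subset_convexHull ℝ _ ⟨hlam, h⟩))⟩

/-! ### Dilations along a linear functional -/

section Dilation

variable (A : AddSubmonoid (Fin k → ℝ)) (ω : (Fin k → ℝ) →L[ℝ] ℝ)

/-- The submonoid of the frequencies in `A` that vanish or on which `ω` is positive. -/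
def posFreq : AddSubmonoid (Fin k → ℝ) where
  carrier := {lam | lam ∈ A ∧ (lam = 0 ∨ 0 < ω lam)}
  zero_mem' := ⟨A.zero_mem, Or.inl rfl⟩
  add_mem' := by
    rintro x y ⟨hx, hx'⟩ ⟨hy, hy'⟩
    refine ⟨A.add_mem hx hy, ?_⟩
    rcases hx' with rfl | hx'
    · simpa using hy'
    rcases hy' with rfl | hy'
    · simpa using Or.inr hx'
    · exact Or.inr (by rw [map_add]; exact add_pos hx' hy')

variable {A ω}

lemma posFreq_nonneg (lam : posFreq A ω) : 0 ≤ ω lam := by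
  rcases lam.2.2 with h | h
  · simp [h]
  · exact h.le

variable (A ω) in
/-- The algebra homomorphism sending a frequency `lam` to `s ^ (ω lam) • e_lam`. -/
def dilation (s : unitInterval) :
    AddMonoidAlgebra ℂ (posFreq A ω) →ₐ[ℂ] expSeriesAlg A :=
  AddMonoidAlgebra.lift ℂ (expSeriesAlg A) (posFreq A ω)
    { toFun := fun lam =>
        ⟨((s : ℝ) ^ ω lam.toAdd : ℝ) • apExp k lam.toAdd,
          ⟨_, HasExpSeries.apExp lam.toAdd.2.1 (((s : ℝ) ^ ω lam.toAdd : ℝ) : ℂ)⟩⟩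
      map_one' := Subtype.ext (by simp [apExp_zero])
      map_mul' := fun lam mu => Subtype.ext (by
        simp [apExp_add, Real.rpow_add_of_nonneg s.2.1 (posFreq_nonneg lam.toAdd)
          (posFreq_nonneg mu.toAdd), smul_smul]
        rw [mul_comm ((s : ℝ) ^ ω lam.toAdd)]) }

lemma coe_dilation (s : unitInterval) (x : AddMonoidAlgebra ℂ (posFreq A ω)) :
    (dilation A ω s x : APB k) =
      ∑ lam ∈ x.coeff.support, (x.coeff lam * ((s : ℝ) ^ ω lam : ℝ)) • apExp k lam := by
  rw [dilation, AddMonoidAlgebra.lift_apply, Finsupp.sum]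
  simp [mul_smul]

lemma coe_dilation_one (x : AddMonoidAlgebra ℂ (posFreq A ω)) :
    (dilation A ω 1 x : APB k) = ∑ lam ∈ x.coeff.support, x.coeff lam • apExp k lam := by
  simp [coe_dilation]

lemma dilation_zero (x : AddMonoidAlgebra ℂ (posFreq A ω)) :
    dilation A ω 0 x = algebraMap ℂ _ (x.coeff 0) := by
  refine Subtype.ext ?_
  rw [coe_dilation, Finset.sum_eq_single 0]
  · simp [apExp_zero, Algebra.algebraMap_eq_smul_one]
  · intro lam _ hlam
    have : ω lam ≠ 0 := ne_of_gt (lam.2.2.resolve_left fun h => hlam (Subtype.ext h))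
    simp [Real.zero_rpow this]
  · intro h
    simp [Finsupp.notMem_support_iff.1 h]

/-- The sum of the absolute values of the coefficients. -/
def coeffMass (x : AddMonoidAlgebra ℂ (posFreq A ω)) : ℝ :=
  ∑ lam ∈ x.coeff.support, ‖x.coeff lam‖

lemma hasExpSeries_dilation (s : unitInterval) (x : AddMonoidAlgebra ℂ (posFreq A ω)) :
    HasExpSeries (A : Set (Fin k → ℝ)) (dilation A ω s x) (coeffMass x) := by
  rw [coe_dilation]
  refine (HasExpSeries.of_finset_sum _ _ _ fun lam _ => lam.2.1).mono
    (Finset.sum_le_sum fun lam _ => ?_)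
  rw [norm_mul, Complex.norm_real, Real.norm_of_nonneg (Real.rpow_nonneg s.2.1 _)]
  exact mul_le_of_le_one_right (norm_nonneg _)
    (Real.rpow_le_one s.2.1 s.2.2 (posFreq_nonneg lam))

lemma coeffMass_le {x : AddMonoidAlgebra ℂ (posFreq A ω)} {r : ℝ}
    (h : HasExpSeries (A : Set (Fin k → ℝ)) (dilation A ω 1 x) r) : coeffMass x ≤ r := by
  rw [coe_dilation_one] at h
  exact h.sum_norm_le _ Subtype.val_injective _

lemma eventually_hasExpSeries_dilation_sub (s : unitInterval)
    (x : AddMonoidAlgebra ℂ (posFreq A ω)) {ε : ℝ} (hε : 0 < ε) :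
    ∀ᶠ t in 𝓝 s, HasExpSeries (A : Set (Fin k → ℝ))
      (dilation A ω s x - dilation A ω t x : APB k) ε := by
  have hlim : Tendsto (fun t : unitInterval => ∑ lam ∈ x.coeff.support,
      ‖x.coeff lam * (((s : ℝ) ^ ω lam : ℝ) : ℂ) - x.coeff lam * (((t : ℝ) ^ ω lam : ℝ) : ℂ)‖)
      (𝓝 s) (𝓝 0) := by
    have hcont : Continuous (fun t : unitInterval => ∑ lam ∈ x.coeff.support,
      ‖x.coeff lam * (((s : ℝ) ^ ω lam : ℝ) : ℂ) -
        x.coeff lam * (((t : ℝ) ^ ω lam : ℝ) : ℂ)‖) := by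
      refine continuous_finsetSum _ fun lam _ => Continuous.norm (continuous_const.sub
        (continuous_const.mul (Complex.continuous_ofReal.comp
          ((Real.continuous_rpow_const (posFreq_nonneg lam)).comp continuous_subtype_val))))
    simpa using hcont.tendsto s
  filter_upwards [hlim.eventually_le_const hε] with t ht
  rw [coe_dilation, coe_dilation, ← Finset.sum_sub_distrib]
  simp_rw [← sub_smul]
  exact (HasExpSeries.of_finset_sum _ _ _ fun lam _ => lam.2.1).mono ht

lemma exists_dilation_one_eq {F : Set (Fin k → ℝ)} (hF : ∀ lam ∈ F, lam ∈ posFreq A ω) {p : APB k}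
    (hp : p ∈ Submodule.span ℂ (apExp k '' F)) :
    ∃ x, (dilation A ω 1 x : APB k) = p := by
  induction hp using Submodule.span_induction with
  | mem _ h =>
    obtain ⟨lam, hlam, rfl⟩ := h
    exact ⟨AddMonoidAlgebra.single ⟨lam, hF lam hlam⟩ 1, by
      simp [dilation, AddMonoidAlgebra.lift_single]⟩
  | zero => exact ⟨0, by simp⟩
  | add _ _ _ _ hx hy =>
    obtain ⟨x, rfl⟩ := hx
    obtain ⟨y, rfl⟩ := hy
    exact ⟨x + y, by simp⟩
  | smul c _ _ hx =>
    obtain ⟨x, rfl⟩ := hx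
    exact ⟨c • x, by simp⟩

end Dilation

/-! ### Unimodular rows -/

section Hermite

variable {n : Type*} [Fintype n] {A : AddSubmonoid (Fin k → ℝ)}

lemma hasExpSeries_one_sub_dotProduct {a a' b : n → expSeriesAlg A} {r ε C : ℝ}
    (h : HasExpSeries (A : Set (Fin k → ℝ)) (1 - (a ⬝ᵥ b : expSeriesAlg A) : APB k) r)
    (ha : ∀ i, HasExpSeries (A : Set (Fin k → ℝ)) (a i - a' i : APB k) ε)
    (hb : ∀ i, HasExpSeries (A : Set (Fin k → ℝ)) (b i) C) :
    HasExpSeries (A : Set (Fin k → ℝ)) (1 - (a' ⬝ᵥ b : expSeriesAlg A) : APB k)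
      (r + Fintype.card n * (ε * C)) := by
  have hsum := h.add (HasExpSeries.sum Finset.univ fun i _ =>
    (ha i).mul (fun x hx y hy => A.add_mem hx hy) (hb i))
  convert hsum using 1
  · simp [dotProduct, sub_mul]
  · simp

variable [DecidableEq n]

lemma rowEquiv_of_hasExpSeries_sub {a a' b : n → expSeriesAlg A} {r ε C : ℝ}
    (h : HasExpSeries (A : Set (Fin k → ℝ)) (1 - (a ⬝ᵥ b : expSeriesAlg A) : APB k) r)
    (ha : ∀ i, HasExpSeries (A : Set (Fin k → ℝ)) (a i - a' i : APB k) ε)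
    (hb : ∀ i, HasExpSeries (A : Set (Fin k → ℝ)) (b i) C)
    (hr : r < 1) (hlt : r + Fintype.card n * (ε * C) < 1) : RowEquiv a a' :=
  RowEquiv.of_isUnit_dotProduct (isUnit_of_hasExpSeries_one_sub _ h hr)
    (isUnit_of_hasExpSeries_one_sub _ (hasExpSeries_one_sub_dotProduct h ha hb) hlt)

variable {ω : (Fin k → ℝ) →L[ℝ] ℝ}

lemma rowEquiv_dilation (x y : n → AddMonoidAlgebra ℂ (posFreq A ω))
    (h : coeffMass (1 - x ⬝ᵥ y) < 1) (s t : unitInterval) :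
    RowEquiv (fun i => dilation A ω s (x i)) (fun i => dilation A ω t (x i)) := by
  set C : ℝ := ∑ i, coeffMass (y i)
  have hnonneg : ∀ i, 0 ≤ coeffMass (y i) := fun i => (hasExpSeries_dilation 1 (y i)).nonneg
  have hC0 : 0 ≤ C := Finset.sum_nonneg fun i _ => hnonneg i
  have hC : ∀ i, coeffMass (y i) ≤ C := fun i =>
    Finset.single_le_sum (fun j _ => hnonneg j) (Finset.mem_univ i)
  set D : ℝ := (Fintype.card n + 1) * (C + 1)
  have hD : 0 < D := by positivity
  set ε : ℝ := (1 - coeffMass (1 - x ⬝ᵥ y)) / D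
  have hε : 0 < ε := div_pos (sub_pos.2 h) hD
  have hεD : ε * D = 1 - coeffMass (1 - x ⬝ᵥ y) := div_mul_cancel₀ _ hD.ne'
  have hlt : coeffMass (1 - x ⬝ᵥ y) + Fintype.card n * (ε * C) < 1 := by
    have : Fintype.card n * (ε * C) < ε * D := by
      simp only [D]
      have hcard : (0 : ℝ) ≤ Fintype.card n := Nat.cast_nonneg _
      nlinarith [mul_nonneg hε.le hC0, mul_nonneg hε.le hcard]
    linarith
  have hone : ∀ s, HasExpSeries (A : Set (Fin k → ℝ))
      (1 - ((fun i => dilation A ω s (x i)) ⬝ᵥ (fun i => dilation A ω s (y i)) :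
        expSeriesAlg A) : APB k) (coeffMass (1 - x ⬝ᵥ y)) := by
    intro s
    convert hasExpSeries_dilation s (1 - x ⬝ᵥ y) using 1
    simp [dotProduct]
  refine IsPreconnected.induction₂ (s := Set.univ) isPreconnected_univ
    (fun s t => RowEquiv (fun i => dilation A ω s (x i)) (fun i => dilation A ω t (x i)))
    (fun s _ => ?_) (fun _ _ _ _ _ _ h h' => h.trans h') (fun _ _ _ _ h => h.symm)
    (Set.mem_univ s) (Set.mem_univ t)
  rw [nhdsWithin_univ]
  filter_upwards [eventually_all.2 fun i => eventually_hasExpSeries_dilation_sub s (x i) hε]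
    with t ht
  exact rowEquiv_of_hasExpSeries_sub (hone s) ht
    (fun i => (hasExpSeries_dilation s (y i)).mono (hC i)) h hlt

lemma rowEquiv_dilation_single (x y : n → AddMonoidAlgebra ℂ (posFreq A ω))
    (h : coeffMass (1 - x ⬝ᵥ y) < 1) (i : n) :
    RowEquiv (fun j => dilation A ω 1 (x j)) (Pi.single i 1) := by
  refine (rowEquiv_dilation x y h 1 0).trans ?_
  simp_rw [dilation_zero]
  refine RowEquiv.single_of_algebraMap (c := fun j => (x j).coeff 0) (fun hx => ?_) i
  have hzero : dilation A ω 0 (x ⬝ᵥ y) = 0 := by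
    rw [dotProduct, map_sum]
    refine Finset.sum_eq_zero fun j _ => ?_
    rw [map_mul, dilation_zero (x j), congrFun hx j]
    simp
  have hnorm := (hasExpSeries_dilation 0 (1 - x ⬝ᵥ y)).norm_le
  rw [map_sub, map_one, hzero, sub_zero, OneMemClass.coe_one, norm_one] at hnorm
  exact absurd h hnorm.not_gt

/-- Unimodular rows over the algebra of exponential series with frequencies in a submonoid of a
halfspace are equivalent to coordinate rows. -/
theorem rowEquiv_single_of_dotProduct_eq_one {S : Set (Fin k → ℝ)} (hS : IsHalfspace k S)
    (hAS : (A : Set (Fin k → ℝ)) ⊆ S) {a b : n → expSeriesAlg A} (hab : a ⬝ᵥ b = 1) (i : n) :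
    RowEquiv a (Pi.single i 1) := by
  have hbound : ∀ c : n → expSeriesAlg A, ∃ C : ℝ, 0 ≤ C ∧
      ∀ i, HasExpSeries (A : Set (Fin k → ℝ)) (c i) C := by
    intro c
    choose r hr using fun i => (c i).2
    exact ⟨∑ i, r i, Finset.sum_nonneg fun i _ => (hr i).nonneg, fun i => (hr i).mono
      (Finset.single_le_sum (fun j _ => (hr j).nonneg) (Finset.mem_univ i))⟩
  obtain ⟨Ca, hCa0, hCa⟩ := hbound a
  obtain ⟨Cb, hCb0, hCb⟩ := hbound b
  set D : ℝ := (Fintype.card n + 1) * (Ca + Cb + 2)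
  have hD : 1 ≤ D := by
    simp only [D]
    nlinarith [(Nat.cast_nonneg (Fintype.card n) : (0 : ℝ) ≤ Fintype.card n)]
  set ε : ℝ := D⁻¹
  have hε : 0 < ε := by positivity
  have hε1 : ε ≤ 1 := inv_le_one_of_one_le₀ hD
  have hsmall : Fintype.card n * (ε * Cb) + Fintype.card n * (ε * (Ca + 1)) < 1 := by
    have : ε * D = 1 := inv_mul_cancel₀ (by positivity)
    simp only [D] at this
    have hcard : (0 : ℝ) ≤ Fintype.card n := Nat.cast_nonneg _
    nlinarith [mul_nonneg hε.le hCa0, mul_nonneg hε.le hCb0, mul_nonneg hε.le hcard]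
  choose F p hFA hp hpε using fun i => (hCa i).exists_truncation hε
  choose G q hGA hq hqε using fun i => (hCb i).exists_truncation hε
  classical
  obtain ⟨ω, hω⟩ := hS.exists_pos_functional (Finset.univ.biUnion F ∪ Finset.univ.biUnion G) (by
    intro lam hlam
    simp only [Finset.coe_union, Finset.coe_biUnion, Set.mem_union, Set.mem_iUnion] at hlam
    rcases hlam with ⟨j, _, hj⟩ | ⟨j, _, hj⟩
    · exact hAS (hFA j hj)
    · exact hAS (hGA j hj))
  have hFω : ∀ i, ∀ lam ∈ (F i : Set (Fin k → ℝ)), lam ∈ posFreq A ω := fun i lam hlam =>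
    ⟨hFA i hlam, or_iff_not_imp_left.2 (hω lam (Finset.mem_union_left _
      (Finset.mem_biUnion.2 ⟨i, Finset.mem_univ i, hlam⟩)))⟩
  have hGω : ∀ i, ∀ lam ∈ (G i : Set (Fin k → ℝ)), lam ∈ posFreq A ω := fun i lam hlam =>
    ⟨hGA i hlam, or_iff_not_imp_left.2 (hω lam (Finset.mem_union_right _
      (Finset.mem_biUnion.2 ⟨i, Finset.mem_univ i, hlam⟩)))⟩
  choose x hx using fun i => exists_dilation_one_eq (hFω i) (hp i)
  choose y hy using fun i => exists_dilation_one_eq (hGω i) (hq i)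
  simp_rw [← hx] at hpε
  simp_rw [← hy] at hqε
  set a' : n → expSeriesAlg A := fun i => dilation A ω 1 (x i)
  set b' : n → expSeriesAlg A := fun i => dilation A ω 1 (y i)
  have hab0 : HasExpSeries (A : Set (Fin k → ℝ)) (1 - (a ⬝ᵥ b : expSeriesAlg A) : APB k) 0 := by
    rw [hab]
    simpa using HasExpSeries.zero
  have ha'b := hasExpSeries_one_sub_dotProduct (a' := a') hab0 hpε hCb
  rw [zero_add] at ha'b
  have ha' : ∀ i, HasExpSeries (A : Set (Fin k → ℝ)) (a' i) (Ca + 1) := fun i => by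
    have := ((hCa i).sub (hpε i)).mono (add_le_add_right hε1 Ca)
    rwa [sub_sub_cancel] at this
  have hb'a' := hasExpSeries_one_sub_dotProduct (a' := b') (by rwa [dotProduct_comm]) hqε ha'
  have hmass : coeffMass (1 - x ⬝ᵥ y) < 1 := by
    refine (coeffMass_le ?_).trans_lt hsmall
    rw [dotProduct_comm] at hb'a'
    convert hb'a' using 1
    simp [dotProduct, a', b']
  have hcard : (0 : ℝ) ≤ Fintype.card n * (ε * (Ca + 1)) := by positivity
  exact (rowEquiv_of_hasExpSeries_sub hab0 hpε hCb one_pos (by linarith)).trans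
    (rowEquiv_dilation_single x y hmass i)

end Hermite

/-- **Hermite property of `APW^k_Σ`** (Theorem 1.2 for `APW`).  Let `S ⊂ ℝ^k`
be a halfspace and `Σ ⊆ S` an additive semigroup containing `0`.  Then the
unital Banach algebra `APW^k_Σ` (Wiener algebra of almost periodic functions
with absolutely convergent Bohr-Fourier series and spectrum in `Σ`) is an
Hermite ring. -/
theorem apw_semigroup_hermite (k : ℕ) (S Sg : Set (Fin k → ℝ))
    (hS : IsHalfspace k S) (hSgS : Sg ⊆ S) (h0 : (0 : Fin k → ℝ) ∈ Sg)
    (hadd : ∀ x ∈ Sg, ∀ y ∈ Sg, x + y ∈ Sg) :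
    ∀ (m : ℕ) (a b : Fin (m + 1) → APB k),
      (∀ i, APWmem k Sg (a i)) → (∀ i, APWmem k Sg (b i)) →
      (∑ i, a i * b i) = 1 →
      ∃ M N : Matrix (Fin (m + 1)) (Fin (m + 1)) (APB k),
        (∀ i j, APWmem k Sg (M i j)) ∧ (∀ i j, APWmem k Sg (N i j)) ∧
        (∀ j, M 0 j = a j) ∧ M * N = 1 ∧ N * M = 1 := by
  intro m a b ha hb hab
  let A : AddSubmonoid (Fin k → ℝ) :=
    { carrier := Sg, zero_mem' := h0, add_mem' := fun hx hy => hadd _ hx _ hy }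
  have hrow : (fun i => ⟨a i, (ha i).hasExpSeries⟩ : Fin (m + 1) → expSeriesAlg A) ⬝ᵥ
      (fun i => ⟨b i, (hb i).hasExpSeries⟩) = 1 :=
    Subtype.ext (by simpa [dotProduct] using hab)
  obtain ⟨G, hG⟩ := (rowEquiv_single_of_dotProduct_eq_one hS hSgS hrow 0).symm
  let φ : Matrix (Fin (m + 1)) (Fin (m + 1)) (expSeriesAlg A) →+*
      Matrix (Fin (m + 1)) (Fin (m + 1)) (APB k) := (expSeriesAlg A).val.toRingHom.mapMatrix
  have hφ : ∀ (H : Matrix (Fin (m + 1)) (Fin (m + 1)) (expSeriesAlg A)) i j,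
      APWmem k Sg (φ H i j) := by
    intro H i j
    obtain ⟨r, hr⟩ := (H i j).2
    exact hr.apwMem
  refine ⟨φ G.val, φ G⁻¹.val, hφ _, hφ _, fun j => ?_, ?_, ?_⟩
  · have hj := congrArg Subtype.val (congrFun hG j)
    rw [Matrix.single_one_vecMul] at hj
    exact hj
  · rw [← map_mul, Units.mul_inv, map_one]
  · rw [← map_mul, Units.inv_mul, map_one]
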